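/- Let n ≥ 3, 2 ≤ j ≤ ⌈n/2⌉, δ = (1 2), r = (1 2 … n) in S_n, and dist the word metric with respect to {δ, r, r^{-1}}. Let π ∈ S_n be arbitrary and let ξ ∈ S_n be the permutation whose one-line notation reverses the first j entries of π and agrees with π elsewhere. Then dist(π, ξ r^{⌊j/2⌋ - 1}) = j(j-1) - 1. -/

import Mathlib

/-- The transposition `δ = (1 2)` in `S_n` (0-indexed: swaps `0` and `1`). -/
def delta (n : ℕ) (hn : 2 ≤ n) : Equiv.Perm (Fin n) :=
  Equiv.swap ⟨0, by omega⟩ ⟨1, by omega⟩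

/-- The symmetric generating set `{(1 2), (1 2 … n), (1 n … 2)}` of `S_n`. -/
def gens (n : ℕ) (hn : 2 ≤ n) : Set (Equiv.Perm (Fin n)) :=
  {delta n hn, finRotate n, (finRotate n)⁻¹}

/-- `IsMinWordLen n hn g d` says that `d` is the minimal length of a word in the
generators `{(1 2), (1 2 … n), (1 n … 2)}` whose product is `g`; i.e. the distance
in the Cayley graph from `1` to `g` is exactly `d`. -/
def IsMinWordLen (n : ℕ) (hn : 2 ≤ n) (g : Equiv.Perm (Fin n)) (d : ℕ) : Prop :=
  (∃ l : List (Equiv.Perm (Fin n)),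
      (∀ x ∈ l, x ∈ gens n hn) ∧ l.prod = g ∧ l.length = d) ∧
  (∀ l : List (Equiv.Perm (Fin n)),
      (∀ x ∈ l, x ∈ gens n hn) → l.prod = g → d ≤ l.length)

theorem rot_val {n : ℕ} (x : Fin n) :
    ((finRotate n x : Fin n) : ℕ) = if (x : ℕ) + 1 = n then 0 else (x : ℕ) + 1 := by
  cases n with
  | zero => exact x.elim0
  | succ m =>
    rw [coe_finRotate]
    by_cases h : x = Fin.last m
    · subst h; simp
    · have : (x : ℕ) ≠ m := fun h' => h (Fin.ext h')
      simp [h, this]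

theorem delta_val {n : ℕ} (hn : 2 ≤ n) (x : Fin n) :
    ((delta n hn x : Fin n) : ℕ) =
      if (x : ℕ) = 0 then 1 else if (x : ℕ) = 1 then 0 else (x : ℕ) := by
  unfold delta
  rw [Equiv.swap_apply_def]
  simp only [Fin.ext_iff]
  split_ifs <;> simp

/-- Reversal of the first `j` positions. -/
def rev (n j : ℕ) (hj : j ≤ n) : Equiv.Perm (Fin n) :=
  Function.Involutive.toPerm
    (fun p => if h : (p : ℕ) < j then (⟨j - 1 - (p : ℕ), by omega⟩ : Fin n) else p) (by
      intro p
      by_cases h : (p : ℕ) < j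
      · have h2 : j - 1 - (p : ℕ) < j := by omega
        simp only [h, h2, dif_pos]
        apply Fin.ext
        simp only
        omega
      · simp [h])

theorem rev_val {n j : ℕ} (hj : j ≤ n) (p : Fin n) :
    ((rev n j hj p : Fin n) : ℕ) = if (p : ℕ) < j then j - 1 - (p : ℕ) else (p : ℕ) := by
  show (((if h : (p : ℕ) < j then (⟨j - 1 - (p : ℕ), by omega⟩ : Fin n) else p) : Fin n) : ℕ) = _
  split_ifs <;> rfl

theorem rev_inv {n j : ℕ} (hj : j ≤ n) : (rev n j hj)⁻¹ = rev n j hj := by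
  rw [inv_eq_iff_mul_eq_one]
  ext p
  simp only [Equiv.Perm.mul_apply, rev_val, Equiv.Perm.one_apply]
  split_ifs <;> omega

/-! Upper bound -/

theorem swap_word (n : ℕ) (hn : 2 ≤ n) (m : ℕ) (hm : m + 1 < n) :
    delta n hn * (finRotate n * delta n hn) ^ m * ((finRotate n)⁻¹ * delta n hn) ^ m
      = Equiv.swap ⟨0, by omega⟩ ⟨m + 1, hm⟩ := by
  induction m with
  | zero => simp [delta]
  | succ m ih =>
    have ih := ih (by omega)
    have h1 : delta n hn * (finRotate n * delta n hn) ^ (m + 1) *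
        ((finRotate n)⁻¹ * delta n hn) ^ (m + 1) =
        delta n hn * (finRotate n * (delta n hn * (finRotate n * delta n hn) ^ m *
          ((finRotate n)⁻¹ * delta n hn) ^ m) * (finRotate n)⁻¹) * delta n hn := by
      rw [pow_succ' (finRotate n * delta n hn), pow_succ ((finRotate n)⁻¹ * delta n hn)]
      group
    rw [h1, ih, ← Equiv.swap_apply_apply]
    have hd : delta n hn = (delta n hn)⁻¹ := by simp [delta]
    nth_rewrite 2 [hd]
    rw [← Equiv.swap_apply_apply]
    congr 1
    · apply Fin.ext; rw [delta_val, rot_val]; simp only; split_ifs <;> first | omega | grind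
    · apply Fin.ext; rw [delta_val, rot_val]; simp only; split_ifs <;> first | omega | grind

theorem rev_step (n j : ℕ) (hj : j + 2 ≤ n) :
    rev n (j + 2) hj = Equiv.swap (⟨0, by omega⟩ : Fin n) ⟨j + 1, by omega⟩ *
      (finRotate n * rev n j (by omega) * (finRotate n)⁻¹) := by
  rw [← mul_assoc, eq_mul_inv_iff_mul_eq]
  ext p
  have e1 := rot_val p
  have e2 := rev_val hj (finRotate n p)
  have e3 := rev_val (j := j) (by omega) p
  have e4 := rot_val (rev n j (by omega) p)
  have := p.2
  simp only [Equiv.Perm.mul_apply, Equiv.swap_apply_def, Fin.ext_iff, apply_ite Fin.val]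
  rw [e2, e4, e1, e3]
  clear e1 e2 e3 e4
  grind

theorem mem_pow {n : ℕ} (hn : 2 ≤ n) (x y : Equiv.Perm (Fin n)) (hx : x ∈ gens n hn)
    (hy : y ∈ gens n hn) (m : ℕ) :
    ∃ l : List (Equiv.Perm (Fin n)), (∀ z ∈ l, z ∈ gens n hn) ∧ l.prod = (x * y) ^ m ∧
      l.length = 2 * m := by
  induction m with
  | zero => exact ⟨[], by simp, by simp, by simp⟩
  | succ m ih =>
    obtain ⟨l, h1, h2, h3⟩ := ih
    refine ⟨x :: y :: l, ?_, ?_, ?_⟩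
    · intro z hz
      simp only [List.mem_cons] at hz
      rcases hz with rfl | rfl | hz
      · exact hx
      · exact hy
      · exact h1 z hz
    · simp [h2, pow_succ', mul_assoc]
    · simp [h3]; ring

theorem swap_list (n : ℕ) (hn : 2 ≤ n) (m : ℕ) (hm : m + 1 < n) :
    ∃ l : List (Equiv.Perm (Fin n)), (∀ z ∈ l, z ∈ gens n hn) ∧
      l.prod = Equiv.swap ⟨0, by omega⟩ ⟨m + 1, hm⟩ ∧ l.length = 4 * m + 1 := by
  obtain ⟨l1, a1, a2, a3⟩ := mem_pow hn (finRotate n) (delta n hn) (by simp [gens])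
    (by simp [gens]) m
  obtain ⟨l2, b1, b2, b3⟩ := mem_pow hn (finRotate n)⁻¹ (delta n hn) (by simp [gens])
    (by simp [gens]) m
  refine ⟨delta n hn :: (l1 ++ l2), ?_, ?_, ?_⟩
  · intro z hz
    simp only [List.mem_cons, List.mem_append] at hz
    rcases hz with rfl | hz | hz
    · simp [gens]
    · exact a1 z hz
    · exact b1 z hz
  · rw [← swap_word n hn m hm, List.prod_cons, List.prod_append, a2, b2, mul_assoc]
  · simp [a3, b3]; ring

theorem upper (n : ℕ) (hn : 2 ≤ n) (j : ℕ) (hj : j + 2 ≤ n) :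
    ∃ l : List (Equiv.Perm (Fin n)), (∀ z ∈ l, z ∈ gens n hn) ∧
      l.prod = rev n (j + 2) hj * finRotate n ^ (j / 2) ∧
      l.length + 1 = (j + 2) * (j + 1) := by
  induction j using Nat.twoStepInduction with
  | zero =>
    refine ⟨[delta n hn], by simp [gens], ?_, by simp⟩
    ext p
    simp only [List.prod_singleton, delta_val, rev_val, Nat.zero_div, pow_zero, mul_one]
    split_ifs <;> omega
  | one =>
    obtain ⟨l, h1, h2, h3⟩ := swap_list n hn 1 (by omega)
    refine ⟨l, h1, ?_, by simp [h3]⟩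
    rw [h2]
    ext p
    simp only [rev_val, Nat.reduceDiv, pow_zero, mul_one, Equiv.swap_apply_def, Fin.ext_iff,
      apply_ite Fin.val]
    split_ifs <;> omega
  | more j ih _ =>
    obtain ⟨l, h1, h2, h3⟩ := ih (by omega)
    obtain ⟨l', a1, a2, a3⟩ := swap_list n hn (j + 2) (by omega)
    refine ⟨l' ++ (finRotate n :: l), ?_, ?_, ?_⟩
    · intro z hz
      simp only [List.mem_cons, List.mem_append] at hz
      rcases hz with hz | rfl | hz
      · exact a1 z hz
      · simp [gens]
      · exact h1 z hz
    · have : (j + 2) / 2 = j / 2 + 1 := by omega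
      rw [rev_step n (j + 2) hj, List.prod_append, List.prod_cons, a2, h2, this, pow_succ']
      group
    · simp only [List.length_append, List.length_cons, a3]
      nlinarith

/-! Lower bound -/

/-- Number of (affine) inversions of the lift `g i + n * a i`. -/
def Phi {n : ℕ} (g : Equiv.Perm (Fin n)) (a : Fin n → ℤ) : ℤ :=
  ∑ k : Fin n, ∑ i : Fin n,
    if (i : ℕ) < k then |a k - a i - (if (g k : ℕ) < g i then 1 else 0)| else 0

theorem phi_rot {n : ℕ} (g : Equiv.Perm (Fin n)) (a : Fin n → ℤ) :
    ∃ b, Phi (finRotate n * g) b = Phi g a := by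
  refine ⟨fun i => if (g i : ℕ) + 1 = n then a i + 1 else a i, ?_⟩
  unfold Phi
  refine Finset.sum_congr rfl fun k _ => Finset.sum_congr rfl fun i _ => ?_
  by_cases h : (i : ℕ) < k
  · have hne : (g k : ℕ) ≠ g i := by
      intro h'
      have := g.injective (Fin.ext h')
      subst this; omega
    rw [if_pos h, if_pos h]
    congr 1
    simp only [Equiv.Perm.mul_apply, rot_val]
    have := (g k).2
    have := (g i).2
    split_ifs <;> omega
  · simp [h]

theorem phi_rot_inv {n : ℕ} (g : Equiv.Perm (Fin n)) (a : Fin n → ℤ) :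
    ∃ b, Phi ((finRotate n)⁻¹ * g) b = Phi g a := by
  obtain ⟨h, rfl⟩ : ∃ h, g = finRotate n * h := ⟨(finRotate n)⁻¹ * g, by group⟩
  refine ⟨fun i => if (h i : ℕ) + 1 = n then a i - 1 else a i, ?_⟩
  rw [inv_mul_cancel_left]
  unfold Phi
  refine Finset.sum_congr rfl fun k _ => Finset.sum_congr rfl fun i _ => ?_
  by_cases h' : (i : ℕ) < k
  · have hne : (h k : ℕ) ≠ h i := by
      intro h''
      have := h.injective (Fin.ext h'')
      subst this; omega
    rw [if_pos h', if_pos h']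
    congr 1
    simp only [Equiv.Perm.mul_apply, rot_val]
    have := (h k).2
    have := (h i).2
    split_ifs <;> omega
  · simp [h']

theorem phi_delta {n : ℕ} (hn : 2 ≤ n) (g : Equiv.Perm (Fin n)) (a : Fin n → ℤ) :
    Phi (delta n hn * g) a ≤ Phi g a + 1 := by
  classical
  let Q : Fin n × Fin n → Prop := fun p => (p.2 : ℕ) < p.1 ∧
    (((g p.1 : ℕ) = 0 ∧ (g p.2 : ℕ) = 1) ∨ ((g p.1 : ℕ) = 1 ∧ (g p.2 : ℕ) = 0))
  have hQ : (∑ k : Fin n, ∑ i : Fin n, if Q (k, i) then (1 : ℤ) else 0) ≤ 1 := by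
    rw [← Fintype.sum_prod_type' (f := fun k i => if Q (k, i) then (1 : ℤ) else 0)]
    simp only [Prod.mk.eta]
    rw [Finset.sum_boole]
    norm_cast
    rw [Finset.card_le_one]
    rintro ⟨k, i⟩ h ⟨k', i'⟩ h'
    simp only [Finset.mem_filter, Finset.mem_univ, true_and, Q] at h h'
    have inj : ∀ x y : Fin n, (g x : ℕ) = g y → x = y := fun x y e => g.injective (Fin.ext e)
    obtain ⟨h1, ⟨h2, h3⟩ | ⟨h2, h3⟩⟩ := h <;> obtain ⟨h1', ⟨h2', h3'⟩ | ⟨h2', h3'⟩⟩ := h'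
    · rw [inj k k' (by omega), inj i i' (by omega)]
    · have e1 := inj k i' (by omega)
      have e2 := inj i k' (by omega)
      subst e1 e2; omega
    · have e1 := inj k i' (by omega)
      have e2 := inj i k' (by omega)
      subst e1 e2; omega
    · rw [inj k k' (by omega), inj i i' (by omega)]
  refine le_trans ?_ (add_le_add_right hQ _)
  unfold Phi
  rw [← Finset.sum_add_distrib]
  refine Finset.sum_le_sum fun k _ => ?_
  rw [← Finset.sum_add_distrib]
  refine Finset.sum_le_sum fun i _ => ?_
  by_cases h : (i : ℕ) < k
  · have hne : (g k : ℕ) ≠ g i := by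
      intro h'
      have := g.injective (Fin.ext h')
      subst this; omega
    simp only [Q, h, if_true, true_and, Equiv.Perm.mul_apply, delta_val]
    split_ifs <;> first | omega | grind
  · simp only [h, Q, if_false, false_and, add_zero, le_refl]

theorem phi_word {n : ℕ} (hn : 2 ≤ n) (N : ℕ) : ∀ l : List (Equiv.Perm (Fin n)),
    l.length ≤ N → (∀ x ∈ l, x ∈ gens n hn) →
    ∃ a, 2 * Phi l.prod a ≤ l.length + 1 ∧
      (2 * Phi l.prod a ≤ l.length ∨ ∃ l', l = delta n hn :: l') := by
  induction N with
  | zero =>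
    intro l hl _
    have : l = [] := List.length_eq_zero_iff.mp (by omega)
    subst this
    have h0 : Phi (1 : Equiv.Perm (Fin n)) 0 = 0 := by
      unfold Phi
      refine Finset.sum_eq_zero fun k _ => Finset.sum_eq_zero fun i _ => ?_
      by_cases h : (i : ℕ) < k
      · have h' : ¬ (((1 : Equiv.Perm (Fin n)) k : Fin n) : ℕ) < ((1 : Equiv.Perm (Fin n)) i : Fin n) := by
          rw [Equiv.Perm.one_apply, Equiv.Perm.one_apply]; omega
        rw [if_pos h, if_neg h']; rfl
      · rw [if_neg h]
    exact ⟨0, by simp [h0], Or.inl (by simp [h0])⟩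
  | succ N ih =>
    intro l hl hg
    cases l with
    | nil => exact ih [] (by simp) (by simp)
    | cons x t =>
      simp only [List.length_cons] at hl
      obtain ⟨a, h1, h2⟩ := ih t (by omega) (fun y hy => hg y (by simp [hy]))
      have hx := hg x (by simp)
      simp only [gens, Set.mem_insert_iff, Set.mem_singleton_iff] at hx
      simp only [List.prod_cons, List.length_cons, Nat.cast_add, Nat.cast_one]
      rcases hx with rfl | rfl | rfl
      · rcases h2 with h2 | ⟨t', rfl⟩
        · have := phi_delta hn t.prod a
          exact ⟨a, by linarith, Or.inr ⟨t, rfl⟩⟩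
        · simp only [List.length_cons] at hl
          obtain ⟨b, h3, _⟩ := ih t' (by omega) (fun y hy => hg y (by simp [hy]))
          have hd : delta n hn * delta n hn = 1 := by simp [delta]
          refine ⟨b, ?_, Or.inr ⟨_, rfl⟩⟩
          rw [List.prod_cons, ← mul_assoc, hd, one_mul]
          simp only [List.length_cons, Nat.cast_add, Nat.cast_one]
          linarith
      · obtain ⟨b, hb⟩ := phi_rot t.prod a
        exact ⟨b, by rw [hb]; linarith, Or.inl (by rw [hb]; linarith)⟩
      · obtain ⟨b, hb⟩ := phi_rot_inv t.prod a
        exact ⟨b, by rw [hb]; linarith, Or.inl (by rw [hb]; linarith)⟩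

theorem phi_rot_pow {n : ℕ} (g : Equiv.Perm (Fin n)) (k : ℕ) : ∀ (a : Fin n → ℤ),
    ∃ b, Phi (finRotate n ^ k * g) b = Phi g a := by
  induction k with
  | zero => intro a; exact ⟨a, by simp⟩
  | succ k ih =>
    intro a
    obtain ⟨b, hb⟩ := ih a
    obtain ⟨c, hc⟩ := phi_rot (finRotate n ^ k * g) b
    exact ⟨c, by rw [pow_succ', mul_assoc, hc, hb]⟩

theorem pair_sum (b : ℕ → ℤ) (j : ℕ) :
    ∑ k ∈ Finset.range j, ∑ i ∈ Finset.range k, (b i + b k)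
      = ((j : ℤ) - 1) * ∑ i ∈ Finset.range j, b i := by
  induction j with
  | zero => simp
  | succ j ih =>
    rw [Finset.sum_range_succ, ih, Finset.sum_range_succ, Finset.sum_add_distrib]
    simp
    ring

theorem core (n j : ℕ) (hj : 2 ≤ j) (hn : 2 * j ≤ n + 1) (A : ℕ → ℤ) :
    (j : ℤ) * (j - 1) ≤ 2 * ∑ k ∈ Finset.range n, ∑ i ∈ Finset.range k,
      |A k - A i - (if k < j then 1 else 0)| := by
  have hjn : j ≤ n := by omega
  set T := ∑ k ∈ Finset.range j, ∑ i ∈ Finset.range k, |A k - A i| with hT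
  set O := ∑ k ∈ Finset.Ico j n, ∑ i ∈ Finset.range j, |A k - A i| with hO
  have hT0 : 0 ≤ T := Finset.sum_nonneg fun _ _ => Finset.sum_nonneg fun _ _ => abs_nonneg _
  have h1 : ∀ m, T ≤ ((j : ℤ) - 1) * ∑ i ∈ Finset.range j, |A m - A i| := by
    intro m
    rw [← pair_sum]
    refine Finset.sum_le_sum fun k _ => Finset.sum_le_sum fun i _ => ?_
    have := abs_sub_le (A k) (A m) (A i)
    rw [abs_sub_comm (A k) (A m)] at this
    linarith
  have h2 : ((n : ℤ) - j) * T ≤ ((j : ℤ) - 1) * O := by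
    rw [hO, Finset.mul_sum (s := Finset.Ico j n)]
    have := Finset.sum_le_sum (s := Finset.Ico j n) fun m _ => h1 m
    simp only [Finset.sum_const, Nat.card_Ico, nsmul_eq_mul] at this
    rwa [Nat.cast_sub hjn] at this
  have h3 : T ≤ O := by
    have h4 : ((j : ℤ) - 1) * T ≤ ((j : ℤ) - 1) * O := by
      refine le_trans (mul_le_mul_of_nonneg_right ?_ hT0) h2
      omega
    exact le_of_mul_le_mul_left h4 (by omega)
  rw [← Finset.sum_range_add_sum_Ico _ hjn]
  have h5 : O ≤ ∑ k ∈ Finset.Ico j n, ∑ i ∈ Finset.range k,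
      |A k - A i - (if k < j then 1 else 0)| := by
    refine Finset.sum_le_sum fun k hk => ?_
    rw [Finset.mem_Ico] at hk
    simp only [not_lt.mpr hk.1, if_false, sub_zero]
    exact Finset.sum_le_sum_of_subset_of_nonneg
      (by intro x; simp only [Finset.mem_range]; omega) (fun _ _ _ => abs_nonneg _)
  have h6 : (j : ℤ) * (j - 1) ≤ 2 * (∑ k ∈ Finset.range j, ∑ i ∈ Finset.range k,
      |A k - A i - (if k < j then 1 else 0)|) + 2 * T := by
    have := pair_sum (fun _ => 1) j
    simp only [Finset.sum_const, Finset.card_range, nsmul_eq_mul, mul_one] at this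
    rw [mul_comm, ← this, ← mul_add, hT, ← Finset.sum_add_distrib, Finset.mul_sum]
    refine Finset.sum_le_sum fun k hk => ?_
    rw [Finset.mem_range] at hk
    simp only [hk, if_true]
    rw [← Finset.sum_add_distrib, Finset.mul_sum]
    have h7 : (k : ℤ) * (1 + 1) = ∑ i ∈ Finset.range k, (2 : ℤ) := by simp
    rw [h7]
    refine Finset.sum_le_sum fun i _ => ?_
    grind
  linarith

theorem phi_rev (n j : ℕ) (hj : 2 ≤ j) (hn : 2 * j ≤ n + 1) (a : Fin n → ℤ) :
    (j : ℤ) * (j - 1) ≤ 2 * Phi (rev n j (by omega)) a := by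
  have h := core n j hj hn (fun i => if h : i < n then a ⟨i, h⟩ else 0)
  refine le_trans h (le_of_eq ?_)
  congr 1
  unfold Phi
  rw [Finset.sum_range]
  refine Finset.sum_congr rfl fun k _ => ?_
  have hk : Finset.range (k : ℕ) = (Finset.range n).filter (fun i => i < (k : ℕ)) := by
    ext i; simp only [Finset.mem_range, Finset.mem_filter]; have := k.2; omega
  rw [hk, Finset.sum_filter, Finset.sum_range]
  refine Finset.sum_congr rfl fun i _ => ?_
  by_cases hik : (i : ℕ) < k
  · rw [if_pos hik, if_pos hik]
    simp only [Fin.is_lt, dif_pos, Fin.eta, rev_val]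
    congr 2
    split_ifs <;> omega
  · rw [if_neg hik, if_neg hik]

/-- For `n ≥ 3`, `2 ≤ j ≤ ⌈n/2⌉`, any `π ∈ S_n`, and `ξ` the
permutation whose one-line notation reverses the first `j` entries of `π` and
agrees with `π` elsewhere, the word metric with respect to `{(1 2), r, r⁻¹}`
(`r = (1 2 … n)`) satisfies `dist(π, ξ r^(⌊j/2⌋ - 1)) = j(j-1) - 1`. -/
theorem stmt14 (n : ℕ) (hn : 3 ≤ n) (j : ℕ) (hj1 : 2 ≤ j) (hj2 : j ≤ (n + 1) / 2)
    (π ξ : Equiv.Perm (Fin n))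
    (hξ : ∀ p : Fin n, ξ p =
      if h : (p : ℕ) < j then π ⟨j - 1 - (p : ℕ), by omega⟩ else π p) :
    IsMinWordLen n (by omega) (π⁻¹ * (ξ * (finRotate n) ^ (j / 2 - 1)))
      (j * (j - 1) - 1) := by
  have hjn : j ≤ n := by omega
  have hg : π⁻¹ * (ξ * (finRotate n) ^ (j / 2 - 1)) =
      rev n j hjn * (finRotate n) ^ (j / 2 - 1) := by
    rw [← mul_assoc]
    congr 1
    rw [inv_mul_eq_iff_eq_mul]
    ext p
    rw [hξ p, Equiv.Perm.mul_apply]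
    congr 1
    split_ifs with h
    · congr 1
      apply Fin.ext
      rw [rev_val, if_pos h]
    · congr 1
      apply Fin.ext
      rw [rev_val, if_neg h]
  rw [hg]
  constructor
  · obtain ⟨i, rfl⟩ : ∃ i, j = i + 2 := ⟨j - 2, by omega⟩
    obtain ⟨l, h1, h2, h3⟩ := upper n (by omega) i hjn
    refine ⟨l, h1, ?_, ?_⟩
    · rw [h2]; congr 2; omega
    · have : i + 2 - 1 = i + 1 := by omega
      rw [this]; omega
  · intro l hl hp
    obtain ⟨a, h1, _⟩ := phi_word (n := n) (by omega) l.length ((l.map (·⁻¹)).reverse) (by simp) (by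
      intro x hx
      simp only [List.mem_reverse, List.mem_map] at hx
      obtain ⟨y, hy, rfl⟩ := hx
      have := hl y hy
      simp only [gens, Set.mem_insert_iff, Set.mem_singleton_iff] at this ⊢
      rcases this with rfl | rfl | rfl
      · left; simp [delta]
      · right; right; rfl
      · right; left; simp)
    rw [← List.prod_inv_reverse, hp, mul_inv_rev, rev_inv] at h1
    obtain ⟨b, hb⟩ := phi_rot_pow ((finRotate n ^ (j / 2 - 1))⁻¹ * rev n j hjn) (j / 2 - 1) a
    rw [mul_inv_cancel_left] at hb
    have h2 := phi_rev n j hj1 (by omega) b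
    simp only [List.length_reverse, List.length_map] at h1
    have h3 : (j : ℤ) * (j - 1) ≤ l.length + 1 := by linarith
    obtain ⟨i, rfl⟩ : ∃ i, j = i + 1 := ⟨j - 1, by omega⟩
    have h4 : (i + 1) * i ≤ l.length + 1 := by
      push_cast at h3
      rw [add_sub_cancel_right] at h3
      exact_mod_cast h3
    rw [Nat.add_sub_cancel]
    omega
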